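/- Assume the monomial Simon conjecture: every monomial ideal of S generated in a single degree d with linear quotients can be extended to m^d by linear quotients. Let I ⊂ S be a monomial ideal generated in a single degree such that every power I^k has linear quotients. Then either v(I^k) = α(I)·k − 1 for all k ≫ 0, or v(I^k) = α(I)·k for all k ≫ 0. -/

import Mathlib

open MvPolynomial

noncomputable section

variable (K : Type*) [Field K]

/-- The set of associated primes of `S/I`. -/
def assPrimes {σ : Type*} (I : Ideal (MvPolynomial σ K)) : Set (Ideal (MvPolynomial σ K)) :=
  associatedPrimes (MvPolynomial σ K) (MvPolynomial σ K ⧸ I)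

/-- The v-number of `I` at a prime `p`:
`min {d : ∃ homogeneous f of degree d with (I : f) = p}`. -/
def vNumberAt {σ : Type*} (I p : Ideal (MvPolynomial σ K)) : ℕ :=
  sInf {d | ∃ f : MvPolynomial σ K, f.IsHomogeneous d ∧ I.colon (Ideal.span {f}) = p}

/-- The v-number of `I`:
`min {d : ∃ homogeneous f of degree d with (I : f) ∈ Ass(I)}`. -/
def vNumber {σ : Type*} (I : Ideal (MvPolynomial σ K)) : ℕ :=
  sInf {d | ∃ f : MvPolynomial σ K, f.IsHomogeneous d ∧
    I.colon (Ideal.span {f}) ∈ assPrimes K I}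

/-- The initial degree `α(I) = min {d : I_d ≠ 0}`. -/
def initialDegree {σ : Type*} (I : Ideal (MvPolynomial σ K)) : ℕ :=
  sInf {d | ∃ f ∈ I, f ≠ 0 ∧ f.IsHomogeneous d}

/-- The monomial with exponent vector `m`. -/
def mon {σ : Type*} (m : σ →₀ ℕ) : MvPolynomial σ K := monomial m 1

/-- The degree of an exponent vector. -/
def mdeg {σ : Type*} (m : σ →₀ ℕ) : ℕ := m.sum fun _ e => e

/-- `U` is the minimal monomial generating set `G(I)` of the monomial ideal `I`. -/
def MinimalGens {σ : Type*} [DecidableEq σ] (I : Ideal (MvPolynomial σ K))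
    (U : Finset (σ →₀ ℕ)) : Prop :=
  I = Ideal.span (mon K '' (U : Set (σ →₀ ℕ))) ∧
    ∀ m ∈ U, mon K m ∉ Ideal.span (mon K '' ((U.erase m : Finset (σ →₀ ℕ)) : Set (σ →₀ ℕ)))

/-- An ideal generated by (a subset of the) variables. -/
def GenByVars {σ : Type*} (J : Ideal (MvPolynomial σ K)) : Prop :=
  ∃ B : Set σ, J = Ideal.span ((fun i => (X i : MvPolynomial σ K)) '' B)

/-- The monomial ideal `I` has linear quotients: its minimal monomial generating set can be
ordered `u_1, …, u_m` so that `(u_1, …, u_{j-1}) : u_j` is generated by variables for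
`j = 2, …, m`. -/
def HasLinearQuotients {σ : Type*} [DecidableEq σ] (I : Ideal (MvPolynomial σ K)) : Prop :=
  ∃ L : List (σ →₀ ℕ), L.Nodup ∧ MinimalGens K I L.toFinset ∧
    ∀ (j : ℕ) (hj : j < L.length), 0 < j →
      GenByVars K ((Ideal.span (mon K '' {m | m ∈ L.take j})).colon
        (Ideal.span {mon K (L.get ⟨j, hj⟩)}))

/-- The monomial ideal `I` can be extended by linear quotients by the set `V` of new
monomial generators (`V = G(J) \ G(I)`): `V` can be ordered `v_1, …, v_r` so that
`(I, v_1, …, v_{j-1}) : v_j` is generated by variables for all `j = 1, …, r`. -/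
def ExtendsByLinQuots {σ : Type*} (I : Ideal (MvPolynomial σ K)) (V : Set (σ →₀ ℕ)) : Prop :=
  ∃ L : List (σ →₀ ℕ), L.Nodup ∧ {m | m ∈ L} = V ∧
    ∀ (j : ℕ) (hj : j < L.length),
      GenByVars K ((I ⊔ Ideal.span (mon K '' {m | m ∈ L.take j})).colon
        (Ideal.span {mon K (L.get ⟨j, hj⟩)}))

/-! For a monomial ideal `I`, the v-number is attained by a monomial `x^m` for which `I : x^m` is
generated by variables. If `I` is generated by the monomials with exponents in a set `U` of
vectors of degree `d > 0`, then `I ^ k` is generated by those with exponents in the sumset `k • U`,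
so every such `m` for `I ^ k` has degree at least `d * k - 1`. Conversely, the first generator of
an extension of `I ^ k` to `𝔪 ^ (d * k)` by linear quotients is such a monomial of degree `d * k`;
if there is nothing to add, then `I ^ k = 𝔪 ^ (d * k)` and `d * k - 1` is attained.

It remains to see that the set of `k` for which `d * k - 1` is attained is eventually all or
nothing. Fix a set `B` of variables. The `f` with `f + e_j ∈ k • U` for all `j ∈ B`, over all `k`,
form a module over the monoid generated by the pairs `(1, u)` with `u ∈ U`, and this module is
finitely generated by Dickson's lemma. Hence for large `k` every such `f` at level `k + 1` is
`g + u` with `g` at level `k` and `u ∈ U`, and if the colon ideal at `f` is the prime of `B`, then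
so is the one at `g`. So attainment at `k + 1` implies attainment at `k` for all large `k`. -/

section Development

open Filter Finsupp
open scoped Pointwise

lemma eventually_or_eventually_not_of_succ_imp {p : ℕ → Prop}
    (h : ∀ᶠ k in atTop, p (k + 1) → p k) :
    (∀ᶠ k in atTop, p k) ∨ ∀ᶠ k in atTop, ¬ p k := by
  refine or_iff_not_imp_right.mpr fun hfreq => ?_
  obtain ⟨N, hN⟩ := eventually_atTop.mp h
  filter_upwards [eventually_ge_atTop N] with k hk
  obtain ⟨m, hkm, hm⟩ := frequently_atTop.mp hfreq k
  exact Nat.decreasingInduction' (fun j _ hkj => hN j (hk.trans hkj)) hkm hm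

/-! ### Exponent vectors and sumsets -/

lemma exists_eq_add_single {σ : Type*} {a : σ →₀ ℕ} (ha : a ≠ 0) :
    ∃ (b : σ →₀ ℕ) (i : σ), a = b + single i 1 := by
  obtain ⟨i, hi⟩ := support_nonempty_iff.mpr ha
  have hle : single i 1 ≤ a :=
    single_le_iff.mpr (Nat.one_le_iff_ne_zero.mpr (Finsupp.mem_support_iff.mp hi))
  exact ⟨a - single i 1, i, (tsub_add_cancel_of_le hle).symm⟩

lemma exists_eq_add_single_of_isUpperSet {ι : Type*} [Finite ι] {S : Set (ι →₀ ℕ)}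
    (hS : IsUpperSet S) :
    ∃ N, ∀ c ∈ S, N < c.degree → ∃ b ∈ S, ∃ i, c = b + single i 1 := by
  have hfin : {c | Minimal (· ∈ S) c}.Finite :=
    WellQuasiOrderedLE.finite_of_isAntichain (setOfPred_minimal_antichain _)
  obtain ⟨N, hN⟩ := (hfin.image degree).bddAbove
  refine ⟨N, fun c hc hNc => ?_⟩
  obtain ⟨m, hmc, hm⟩ := exists_minimal_le_of_wellFoundedLT (· ∈ S) c hc
  obtain ⟨e, rfl⟩ := exists_add_of_le hmc
  have he : e ≠ 0 := by
    rintro rfl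
    exact hNc.not_ge (by simpa using hN ⟨m, hm, rfl⟩)
  obtain ⟨b, i, rfl⟩ := exists_eq_add_single he
  exact ⟨m + b, hS le_self_add hm.prop, i, (add_assoc ..).symm⟩

lemma nsmul_range_eq_image_linearCombination {ι M : Type*} [AddCommMonoid M] (u : ι → M) (k : ℕ) :
    k • Set.range u = linearCombination ℕ u '' {c | c.degree = k} := by
  have hrange : Set.range u = linearCombination ℕ u '' ((single · 1) '' Set.univ) := by
    rw [Set.image_image, Set.image_univ]
    simp
  rw [hrange, ← Set.image_nsmul, nsmul_single_one_image]
  simp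

lemma exists_add_mem_of_forall_add_mem_nsmul {M : Type*} [AddCommMonoid M]
    [IsLeftCancelAdd M] {U T : Set M} (hU : U.Finite) (hT : T.Nonempty) :
    ∃ N, ∀ k ≥ N, ∀ f, (∀ t ∈ T, t + f ∈ (k + 1) • U) →
      ∃ g, (∀ t ∈ T, t + g ∈ k • U) ∧ ∃ u ∈ U, f = g + u := by
  have := hU.to_subtype
  have mem_iff (k : ℕ) (a : M) :
      a ∈ k • U ↔ ∃ c : U →₀ ℕ, c.degree = k ∧ linearCombination ℕ Subtype.val c = a := by
    conv_lhs => rw [← Subtype.range_coe (s := U), nsmul_range_eq_image_linearCombination]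
    rfl
  obtain ⟨t₀, ht₀⟩ := hT
  let S : Set (U →₀ ℕ) :=
    {c | ∃ g, t₀ + g = linearCombination ℕ Subtype.val c ∧ ∀ t ∈ T, t + g ∈ c.degree • U}
  have hS : IsUpperSet S := by
    rintro c _ hle ⟨g, hg, hgT⟩
    obtain ⟨e, rfl⟩ := exists_add_of_le hle
    refine ⟨g + linearCombination ℕ Subtype.val e, by rw [map_add, ← hg, add_assoc],
      fun t ht => ?_⟩
    rw [← add_assoc, map_add, add_nsmul]
    exact Set.add_mem_add (hgT t ht) ((mem_iff _ _).mpr ⟨e, rfl, rfl⟩)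
  obtain ⟨N, hN⟩ := exists_eq_add_single_of_isUpperSet hS
  refine ⟨N, fun k hk f hf => ?_⟩
  obtain ⟨c, hck, hc⟩ := (mem_iff _ _).mp (hf t₀ ht₀)
  obtain ⟨b, ⟨g, hg, hgT⟩, u, rfl⟩ := hN c ⟨f, hc.symm, hck ▸ hf⟩ (by omega)
  have hbk : b.degree = k := by simpa using hck
  refine ⟨g, hbk ▸ hgT, u, u.2, add_left_cancel (a := t₀) ?_⟩
  rw [← hc, map_add, linearCombination_single, one_smul, ← hg, add_assoc]

lemma degree_of_mem_nsmul {σ : Type*} {U : Set (σ →₀ ℕ)} {d : ℕ} (hU : ∀ a ∈ U, a.degree = d)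
    {k : ℕ} {a : σ →₀ ℕ} (ha : a ∈ k • U) : a.degree = d * k := by
  induction k generalizing a with
  | zero =>
    rw [zero_nsmul, Set.mem_zero] at ha
    rw [ha, map_zero, mul_zero]
  | succ k ih =>
    rw [succ_nsmul] at ha
    obtain ⟨b, hb, u, hu, rfl⟩ := ha
    rw [map_add, ih hb, hU u hu, Nat.mul_succ]

lemma mem_of_mem_upperClosure_of_degree_eq {σ : Type*} {P : Set (σ →₀ ℕ)} {D : ℕ}
    (hP : ∀ a ∈ P, a.degree = D) {b : σ →₀ ℕ} (hb : b ∈ upperClosure P) (hbD : b.degree = D) :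
    b ∈ P := by
  obtain ⟨a, ha, hab⟩ := mem_upperClosure.mp hb
  obtain ⟨c, rfl⟩ := exists_add_of_le hab
  have hc : c.degree = 0 := by
    rw [map_add, hP a ha] at hbD
    omega
  rwa [(degree_eq_zero_iff c).mp hc, add_zero]

lemma le_degree_of_mem_upperClosure {σ : Type*} {P : Set (σ →₀ ℕ)} {D : ℕ}
    (hP : ∀ a ∈ P, a.degree = D) {b : σ →₀ ℕ} (hb : b ∈ upperClosure P) : D ≤ b.degree := by
  obtain ⟨a, ha, hab⟩ := mem_upperClosure.mp hb
  exact hP a ha ▸ degree_mono hab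

/-! ### Colon ideals of monomial ideals -/

variable {σ : Type*}

lemma mon_mul_mon (a b : σ →₀ ℕ) : mon K a * mon K b = mon K (a + b) := by
  simp [mon, monomial_mul]

lemma mem_span_mon_iff {P : Set (σ →₀ ℕ)} {g : MvPolynomial σ K} :
    g ∈ Ideal.span (mon K '' P) ↔ ∀ a ∈ g.support, a ∈ upperClosure P :=
  mem_ideal_span_monomial_image

lemma mon_mem_span_mon_iff {P : Set (σ →₀ ℕ)} {a : σ →₀ ℕ} :
    mon K a ∈ Ideal.span (mon K '' P) ↔ a ∈ upperClosure P := by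
  classical
  simp [mem_span_mon_iff, mon, support_monomial]

lemma mon_mem_colon_mon_iff {P : Set (σ →₀ ℕ)} {w m : σ →₀ ℕ} :
    mon K w ∈ (Ideal.span (mon K '' P)).colon (Ideal.span {mon K m}) ↔
      w + m ∈ upperClosure P := by
  rw [Ideal.mem_colon_span_singleton, mon_mul_mon, mon_mem_span_mon_iff]

lemma mem_upperClosure_of_mem_colon {P : Set (σ →₀ ℕ)} {f g : MvPolynomial σ K} {a : σ →₀ ℕ}
    (hg : g ∈ (Ideal.span (mon K '' P)).colon (Ideal.span {f}))
    (ha : coeff a (g * f) ≠ 0) : a ∈ upperClosure P :=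
  (mem_span_mon_iff K).mp (Ideal.mem_colon_span_singleton.mp hg) a
    (MvPolynomial.mem_support_iff.mpr ha)

lemma colon_mon_eq_span_X_iff {P : Set (σ →₀ ℕ)} {B : Set σ} {m : σ →₀ ℕ} :
    (Ideal.span (mon K '' P)).colon (Ideal.span {mon K m}) =
        Ideal.span ((fun i => (X i : MvPolynomial σ K)) '' B) ↔
      (∀ i ∈ B, single i 1 + m ∈ upperClosure P) ∧
        ∀ w, w + m ∈ upperClosure P → ∃ i ∈ B, w i ≠ 0 := by
  classical
  rw [le_antisymm_iff, and_comm, Ideal.span_le, Set.image_subset_iff]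
  refine and_congr (forall₂_congr fun i _ => mon_mem_colon_mon_iff K) ⟨fun h w hw => ?_,
    fun h g hg => mem_ideal_span_X_image.mpr fun w hw => h w ?_⟩
  · exact mem_ideal_span_X_image.mp (h ((mon_mem_colon_mon_iff K).mpr hw)) w (by simp [mon])
  · refine mem_upperClosure_of_mem_colon K hg ?_
    rwa [mon, coeff_mul_monomial, mul_one, ← MvPolynomial.mem_support_iff]

variable {K} in
lemma GenByVars.isPrime {J : Ideal (MvPolynomial σ K)} (hJ : GenByVars K J) : J.IsPrime := by
  classical
  obtain ⟨B, hB⟩ := hJ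
  have X_mem {i : σ} (hi : i ∈ B) : X i ∈ J := hB ▸ Ideal.subset_span ⟨i, hi, rfl⟩
  let φ : MvPolynomial σ K →ₐ[K] MvPolynomial σ K := aeval fun i => if i ∈ B then 0 else X i
  have hφ : (Ideal.Quotient.mkₐ K J).comp φ = Ideal.Quotient.mkₐ K J := by
    ext i
    by_cases hi : i ∈ B
    · simp [φ, hi, Ideal.Quotient.eq_zero_iff_mem.mpr (X_mem hi)]
    · simp [φ, hi]
  have hker : J = RingHom.ker φ := by
    apply le_antisymm
    · rw [hB, Ideal.span_le]
      rintro _ ⟨i, hi, rfl⟩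
      simp [φ, hi, RingHom.mem_ker]
    · intro g hg
      have := DFunLike.congr_fun hφ g
      rw [AlgHom.comp_apply, (RingHom.mem_ker).mp hg, map_zero] at this
      exact Ideal.Quotient.eq_zero_iff_mem.mp this.symm
  exact hker ▸ RingHom.ker_isPrime _

lemma colon_mem_assPrimes_iff {I : Ideal (MvPolynomial σ K)} {f : MvPolynomial σ K} :
    I.colon (Ideal.span {f}) ∈ assPrimes K I ↔ (I.colon (Ideal.span {f})).IsPrime := by
  refine ⟨fun h => h.1, fun h => ⟨h, Ideal.Quotient.mk I f, ?_⟩⟩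
  have hcolon : (⊥ : Submodule (MvPolynomial σ K) (MvPolynomial σ K ⧸ I)).colon
      {Ideal.Quotient.mk I f} = I.colon (Ideal.span {f}) := by
    ext r
    rw [Submodule.mem_colon_singleton, Ideal.mem_colon_span_singleton, Submodule.mem_bot,
      ← Ideal.Quotient.eq_zero_iff_mem, map_mul]
    rfl
  rw [hcolon, h.isRadical.radical]

lemma inf_colon_mon_le_colon (I : Ideal (MvPolynomial σ K)) (f : MvPolynomial σ K) :
    f.support.inf (fun m => I.colon (Ideal.span {mon K m})) ≤ I.colon (Ideal.span {f}) := by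
  intro g hg
  rw [Submodule.mem_finsetInf] at hg
  rw [Ideal.mem_colon_span_singleton, ← support_sum_monomial_coeff f, Finset.mul_sum]
  refine Ideal.sum_mem _ fun m hm => ?_
  have hterm : g * monomial m (coeff m f) = C (coeff m f) * (g * mon K m) := by
    rw [mul_left_comm, mon, C_mul_monomial, mul_one]
  rw [hterm]
  exact Ideal.mul_mem_left _ _ (Ideal.mem_colon_span_singleton.mp (hg m hm))

lemma exists_mem_support_genByVars_colon_mon {P : Set (σ →₀ ℕ)} {f : MvPolynomial σ K}
    (hp : ((Ideal.span (mon K '' P)).colon (Ideal.span {f})).IsPrime) :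
    ∃ m ∈ f.support, GenByVars K ((Ideal.span (mon K '' P)).colon (Ideal.span {mon K m})) := by
  set p := (Ideal.span (mon K '' P)).colon (Ideal.span {f})
  obtain ⟨m, hm, hmp⟩ := (Ideal.IsPrime.inf_le' hp).mp (inf_colon_mon_le_colon K _ f)
  refine ⟨m, hm, {i | X i ∈ p}, (colon_mon_eq_span_X_iff K).mpr ⟨fun i hi => ?_, fun w hw => ?_⟩⟩
  · refine mem_upperClosure_of_mem_colon K hi ?_
    rw [coeff_X_mul]
    exact MvPolynomial.mem_support_iff.mp hm
  · have hwp : mon K w ∈ p := hmp ((mon_mem_colon_mon_iff K).mpr hw)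
    rw [mon, monomial_eq, C_1, one_mul, Finsupp.prod, hp.prod_mem_iff] at hwp
    obtain ⟨i, hi, hip⟩ := hwp
    exact ⟨i, hp.mem_of_pow_mem _ hip, Finsupp.mem_support_iff.mp hi⟩

/-! ### The v-number of a monomial ideal -/

/-- The degrees of the monomials `x^m` for which `I : x^m` is a monomial prime ideal, i.e. is
generated by variables; the v-number of a monomial ideal `I` is the least of them. -/
def colonPrimeDegrees (I : Ideal (MvPolynomial σ K)) : Set ℕ :=
  {e | ∃ m : σ →₀ ℕ, m.degree = e ∧ GenByVars K (I.colon (Ideal.span {mon K m}))}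

lemma vNumber_span_mon (P : Set (σ →₀ ℕ)) :
    vNumber K (Ideal.span (mon K '' P)) =
      sInf (colonPrimeDegrees K (Ideal.span (mon K '' P))) := by
  rw [vNumber]
  congr 1
  ext e
  constructor
  · rintro ⟨f, hf, hp⟩
    obtain ⟨m, hm, hgen⟩ :=
      exists_mem_support_genByVars_colon_mon K ((colon_mem_assPrimes_iff K).mp hp)
    exact ⟨m, not_not.mp fun hne => MvPolynomial.mem_support_iff.mp hm (hf.coeff_eq_zero hne),
      hgen⟩
  · rintro ⟨m, hm, hgen⟩
    exact ⟨mon K m, isHomogeneous_monomial _ hm, (colon_mem_assPrimes_iff K).mpr hgen.isPrime⟩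

lemma vNumber_bot : vNumber K (⊥ : Ideal (MvPolynomial σ K)) = 0 := by
  have hcolon : (⊥ : Ideal (MvPolynomial σ K)).colon (Ideal.span {(1 : MvPolynomial σ K)}) = ⊥ := by
    ext g
    simp
  refine Nat.sInf_eq_zero.mpr (Or.inl ⟨1, isHomogeneous_one σ K, ?_⟩)
  rw [colon_mem_assPrimes_iff, hcolon]
  exact Ideal.isPrime_bot

lemma vNumber_top : vNumber K (⊤ : Ideal (MvPolynomial σ K)) = 0 := by
  refine Nat.sInf_eq_zero.mpr (Or.inr (Set.eq_empty_of_forall_notMem ?_))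
  rintro e ⟨f, -, hf⟩
  exact hf.1.ne_top Submodule.top_colon

lemma initialDegree_bot : initialDegree K (⊥ : Ideal (MvPolynomial σ K)) = 0 := by
  refine Nat.sInf_eq_zero.mpr (Or.inr (Set.eq_empty_of_forall_notMem ?_))
  rintro e ⟨f, hf, hf0, -⟩
  exact hf0 hf

lemma span_mon_pow (U : Set (σ →₀ ℕ)) (k : ℕ) :
    Ideal.span (mon K '' U) ^ k = Ideal.span (mon K '' (k • U)) := by
  have himage : mon K '' (k • U) = (mon K '' U) ^ k := by
    induction k with
    | zero => rw [zero_nsmul, pow_zero, Set.image_zero]; rfl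
    | succ k ih =>
      rw [succ_nsmul, pow_succ, ← ih]
      exact Set.image_image2_distrib fun a b => (mon_mul_mon K a b).symm
  rw [himage]
  exact Submodule.span_pow _ k

/-! ### Ideals generated by monomials of one degree -/

variable {P : Set (σ →₀ ℕ)} {D : ℕ}

lemma initialDegree_span_mon (hP : ∀ a ∈ P, a.degree = D) (hne : P.Nonempty) :
    initialDegree K (Ideal.span (mon K '' P)) = D := by
  obtain ⟨a, ha⟩ := hne
  refine IsLeast.csInf_eq ⟨⟨mon K a, Ideal.subset_span ⟨a, ha, rfl⟩, by simp [mon],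
    isHomogeneous_monomial _ (hP a ha)⟩, ?_⟩
  rintro e ⟨f, hfI, hf0, hfe⟩
  obtain ⟨b, hb⟩ := support_nonempty.mpr hf0
  have hbe : b.degree = e :=
    not_not.mp fun h => MvPolynomial.mem_support_iff.mp hb (hfe.coeff_eq_zero h)
  exact hbe ▸ le_degree_of_mem_upperClosure hP ((mem_span_mon_iff K).mp hfI b hb)

lemma le_add_one_of_mem_colonPrimeDegrees (hP : ∀ a ∈ P, a.degree = D) (hne : P.Nonempty) {e : ℕ}
    (he : e ∈ colonPrimeDegrees K (Ideal.span (mon K '' P))) : D ≤ e + 1 := by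
  obtain ⟨m, rfl, B, hB⟩ := he
  obtain ⟨hBm, hmB⟩ := (colon_mon_eq_span_X_iff K).mp hB
  obtain ⟨a, ha⟩ := hne
  obtain ⟨i, hi, -⟩ := hmB a (mem_upperClosure.mpr ⟨a, ha, le_self_add⟩)
  simpa [add_comm] using le_degree_of_mem_upperClosure hP (hBm i hi)

lemma vNumber_eq_sub_one_of_mem (hP : ∀ a ∈ P, a.degree = D) (hne : P.Nonempty)
    (hmem : D - 1 ∈ colonPrimeDegrees K (Ideal.span (mon K '' P))) :
    vNumber K (Ideal.span (mon K '' P)) = D - 1 := by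
  rw [vNumber_span_mon]
  exact IsLeast.csInf_eq
    ⟨hmem, fun e he => Nat.sub_le_of_le_add (le_add_one_of_mem_colonPrimeDegrees K hP hne he)⟩

lemma vNumber_eq_of_mem_of_sub_one_notMem (hP : ∀ a ∈ P, a.degree = D) (hne : P.Nonempty)
    (hmem : D ∈ colonPrimeDegrees K (Ideal.span (mon K '' P)))
    (hnot : D - 1 ∉ colonPrimeDegrees K (Ideal.span (mon K '' P))) :
    vNumber K (Ideal.span (mon K '' P)) = D := by
  rw [vNumber_span_mon]
  refine IsLeast.csInf_eq ⟨hmem, fun e he => ?_⟩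
  have hle := le_add_one_of_mem_colonPrimeDegrees K hP hne he
  have hneq : e ≠ D - 1 := fun h => hnot (h ▸ he)
  omega

variable {K} in
lemma MinimalGens.coe_eq_of_span_mon [DecidableEq σ] {V : Finset (σ →₀ ℕ)}
    (hV : MinimalGens K (Ideal.span (mon K '' P)) V) (hP : ∀ a ∈ P, a.degree = D) :
    (V : Set (σ →₀ ℕ)) = P := by
  have mem_closure_iff (a : σ →₀ ℕ) :
      a ∈ upperClosure (V : Set (σ →₀ ℕ)) ↔ a ∈ upperClosure P := by
    rw [← mon_mem_span_mon_iff K, ← mon_mem_span_mon_iff K, hV.1]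
  have hVP : (V : Set (σ →₀ ℕ)) ⊆ P := by
    intro m hm
    obtain ⟨a, ha, ham⟩ := (mem_closure_iff m).mp (subset_upperClosure hm)
    obtain ⟨v, hv, hva⟩ := (mem_closure_iff a).mpr (subset_upperClosure ha)
    have hvm : v = m := by
      by_contra hne
      exact hV.2 m hm ((mon_mem_span_mon_iff K).mpr
        ⟨v, Finset.mem_erase.mpr ⟨hne, hv⟩, hva.trans ham⟩)
    rwa [le_antisymm (hvm ▸ hva) ham]
  refine hVP.antisymm fun a ha => ?_
  exact mem_of_mem_upperClosure_of_degree_eq (fun v hv => hP v (hVP hv))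
    ((mem_closure_iff a).mpr (subset_upperClosure ha)) (hP a ha)

lemma genByVars_colon_mon_of_degree_add_one_eq (hP : ∀ a, a ∈ P ↔ a.degree = D) {m : σ →₀ ℕ}
    (hm : m.degree + 1 = D) :
    GenByVars K ((Ideal.span (mon K '' P)).colon (Ideal.span {mon K m})) := by
  refine ⟨Set.univ, (colon_mon_eq_span_X_iff K).mpr ⟨fun i _ => ?_, fun w hw => ?_⟩⟩
  · refine subset_upperClosure ((hP _).mpr ?_)
    rw [map_add, degree_single, add_comm, hm]
  · have hle : D ≤ (w + m).degree := le_degree_of_mem_upperClosure (fun a => (hP a).mp) hw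
    have hw0 : w ≠ 0 := by
      rintro rfl
      rw [zero_add] at hle
      omega
    obtain ⟨i, hi⟩ := DFunLike.ne_iff.mp hw0
    exact ⟨i, Set.mem_univ i, hi⟩

variable {K} in
lemma ExtendsByLinQuots.mem_or_sub_one_mem_colonPrimeDegrees (hP : ∀ a ∈ P, a.degree = D)
    (hne : P.Nonempty) (hD : D ≠ 0)
    (hext : ExtendsByLinQuots K (Ideal.span (mon K '' P)) ({m | mdeg m = D} \ P)) :
    D ∈ colonPrimeDegrees K (Ideal.span (mon K '' P)) ∨
      D - 1 ∈ colonPrimeDegrees K (Ideal.span (mon K '' P)) := by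
  obtain ⟨L, -, hL, hquot⟩ := hext
  cases L with
  | nil =>
    have hall (a : σ →₀ ℕ) : a ∈ P ↔ a.degree = D := by
      refine ⟨hP a, fun ha => not_not.mp fun haP => ?_⟩
      have : a ∈ {m | m ∈ ([] : List (σ →₀ ℕ))} := hL ▸ ⟨ha, haP⟩
      exact List.not_mem_nil this
    obtain ⟨a, ha⟩ := hne
    have haD := hP a ha
    have ha0 : a ≠ 0 := by
      rintro rfl
      exact hD (haD.symm.trans (map_zero _))
    obtain ⟨m, i, rfl⟩ := exists_eq_add_single ha0
    have hm : m.degree + 1 = D := by simpa using haD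
    exact Or.inr ⟨m, by omega, genByVars_colon_mon_of_degree_add_one_eq K hall hm⟩
  | cons v L =>
    have hv : v ∈ {m | mdeg m = D} \ P := hL ▸ List.mem_cons_self
    exact Or.inl ⟨v, hv.1, by simpa using hquot 0 (by simp)⟩

/-! ### Stability in large powers -/

variable {U : Set (σ →₀ ℕ)} {d : ℕ}

lemma colon_mon_eq_span_X_of_add {k : ℕ} {B : Set σ} {g u : σ →₀ ℕ} (hu : u ∈ U)
    (hg : ∀ i ∈ B, single i 1 + g ∈ k • U)
    (hgu : (Ideal.span (mon K '' ((k + 1) • U))).colon (Ideal.span {mon K (g + u)}) =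
      Ideal.span ((fun i => (X i : MvPolynomial σ K)) '' B)) :
    (Ideal.span (mon K '' (k • U))).colon (Ideal.span {mon K g}) =
      Ideal.span ((fun i => (X i : MvPolynomial σ K)) '' B) := by
  refine (colon_mon_eq_span_X_iff K).mpr ⟨fun i hi => subset_upperClosure (hg i hi), ?_⟩
  rintro w ⟨v, hv, hvw⟩
  refine ((colon_mon_eq_span_X_iff K).mp hgu).2 w ⟨v + u, ?_, ?_⟩
  · rw [succ_nsmul]
    exact Set.add_mem_add hv hu
  · rw [← add_assoc]
    exact add_le_add_left hvw u

lemma eventually_exists_colon_mon_eq_span_X_of_succ (hU : ∀ a ∈ U, a.degree = d)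
    (hfin : U.Finite) (hne : U.Nonempty) (B : Set σ) :
    ∀ᶠ k in atTop,
      (∃ f : σ →₀ ℕ, f.degree + 1 = d * (k + 1) ∧
        (Ideal.span (mon K '' ((k + 1) • U))).colon (Ideal.span {mon K f}) =
          Ideal.span ((fun i => (X i : MvPolynomial σ K)) '' B)) →
      ∃ g : σ →₀ ℕ, g.degree + 1 = d * k ∧
        (Ideal.span (mon K '' (k • U))).colon (Ideal.span {mon K g}) =
          Ideal.span ((fun i => (X i : MvPolynomial σ K)) '' B) := by
  rcases B.eq_empty_or_nonempty with rfl | hB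
  · refine Eventually.of_forall fun k ⟨f, _, hf⟩ => ?_
    obtain ⟨v, hv⟩ := hne.nsmul (n := k + 1)
    obtain ⟨i, hi, -⟩ := ((colon_mon_eq_span_X_iff K).mp hf).2 v
      (mem_upperClosure.mpr ⟨v, hv, le_self_add⟩)
    exact hi.elim
  obtain ⟨N, hN⟩ := exists_add_mem_of_forall_add_mem_nsmul hfin (hB.image (single · 1))
  filter_upwards [eventually_ge_atTop N] with k hk
  rintro ⟨f, hfd, hf⟩
  have hfB : ∀ t ∈ (single · 1) '' B, t + f ∈ (k + 1) • U := by
    rintro _ ⟨i, hi, rfl⟩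
    refine mem_of_mem_upperClosure_of_degree_eq (fun a => degree_of_mem_nsmul hU)
      (((colon_mon_eq_span_X_iff K).mp hf).1 i hi) ?_
    rw [map_add, degree_single, add_comm, hfd]
  obtain ⟨g, hg, u, hu, rfl⟩ := hN k hk f hfB
  rw [Set.forall_mem_image] at hg
  refine ⟨g, ?_, colon_mon_eq_span_X_of_add K hu (fun i hi => hg hi) hf⟩
  obtain ⟨i, hi⟩ := hB
  have hgi := degree_of_mem_nsmul hU (hg hi)
  rwa [map_add, degree_single, add_comm] at hgi

lemma eventually_sub_one_mem_colonPrimeDegrees_of_succ [Finite σ] (hU : ∀ a ∈ U, a.degree = d)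
    (hne : U.Nonempty) (hd : d ≠ 0) :
    ∀ᶠ k in atTop,
      d * (k + 1) - 1 ∈ colonPrimeDegrees K (Ideal.span (mon K '' ((k + 1) • U))) →
        d * k - 1 ∈ colonPrimeDegrees K (Ideal.span (mon K '' (k • U))) := by
  have hfin : U.Finite := (finite_of_degree_eq d).subset hU
  filter_upwards [eventually_all.mpr
    (eventually_exists_colon_mon_eq_span_X_of_succ K hU hfin hne)] with k hk
  rintro ⟨f, hf, B, hB⟩
  have hpos : 0 < d * (k + 1) := by positivity
  obtain ⟨g, hg, hgB⟩ := hk B ⟨f, by omega, hB⟩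
  exact ⟨g, by omega, B, hgB⟩

theorem stmt7_general [Finite σ] {I : Ideal (MvPolynomial σ K)} (hI : I = Ideal.span (mon K '' U))
    (hU : ∀ a ∈ U, mdeg a = d)
    (hext : ∀ᶠ k in atTop, ExtendsByLinQuots K (I ^ k) ({m | mdeg m = d * k} \ (k • U))) :
    (∀ᶠ k in atTop, vNumber K (I ^ k) = initialDegree K I * k - 1) ∨
      ∀ᶠ k in atTop, vNumber K (I ^ k) = initialDegree K I * k := by
  subst hI
  rcases U.eq_empty_or_nonempty with rfl | hne
  · refine Or.inr ((eventually_ne_atTop 0).mono fun k hk => ?_)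
    rw [Set.image_empty, Ideal.span_empty, initialDegree_bot, ← Ideal.zero_eq_bot, zero_pow hk,
      Ideal.zero_eq_bot, vNumber_bot, zero_mul]
  rw [initialDegree_span_mon K hU hne]
  rcases eq_or_ne d 0 with rfl | hd
  · obtain ⟨u, hu⟩ := hne
    have htop : Ideal.span (mon K '' U) = ⊤ :=
      (Ideal.eq_top_iff_one _).mpr
        (Ideal.subset_span ⟨u, hu, by rw [(degree_eq_zero_iff u).mp (hU u hu)]; rfl⟩)
    refine Or.inr (Eventually.of_forall fun k => ?_)
    rw [htop, Ideal.top_pow, vNumber_top, zero_mul]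
  have hdeg (k : ℕ) : ∀ a ∈ k • U, a.degree = d * k := fun a => degree_of_mem_nsmul hU
  simp only [span_mon_pow] at hext ⊢
  refine (eventually_or_eventually_not_of_succ_imp
    (p := fun k => d * k - 1 ∈ colonPrimeDegrees K (Ideal.span (mon K '' (k • U))))
    (eventually_sub_one_mem_colonPrimeDegrees_of_succ K hU hne hd)).imp (fun h => ?_) fun h => ?_
  · filter_upwards [h] with k hk
    exact vNumber_eq_sub_one_of_mem K (hdeg k) hne.nsmul hk
  · filter_upwards [h, hext, eventually_ne_atTop 0] with k hk hextk hk0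
    have hmem := (hextk.mem_or_sub_one_mem_colonPrimeDegrees (hdeg k) hne.nsmul
      (mul_ne_zero hd hk0)).resolve_right hk
    exact vNumber_eq_of_mem_of_sub_one_notMem K (hdeg k) hne.nsmul hmem hk

lemma extendsByLinQuots_pow_of_simon [DecidableEq σ]
    (hSimon : ∀ (d : ℕ) (J : Ideal (MvPolynomial σ K)) (V : Finset (σ →₀ ℕ)),
      MinimalGens K J V → (∀ m ∈ V, mdeg m = d) → HasLinearQuotients K J →
      ExtendsByLinQuots K J ({m : σ →₀ ℕ | mdeg m = d} \ (V : Set (σ →₀ ℕ))))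
    {I : Ideal (MvPolynomial σ K)} (hI : I = Ideal.span (mon K '' U)) (hU : ∀ a ∈ U, mdeg a = d)
    {k : ℕ} (hlq : HasLinearQuotients K (I ^ k)) :
    ExtendsByLinQuots K (I ^ k) ({m | mdeg m = d * k} \ (k • U)) := by
  rw [hI, span_mon_pow] at hlq ⊢
  have ⟨L, _, hL, _⟩ := hlq
  have hdeg : ∀ a ∈ k • U, a.degree = d * k := fun a => degree_of_mem_nsmul hU
  have hLU := hL.coe_eq_of_span_mon hdeg
  have hext := hSimon (d * k) _ L.toFinset hL (fun m hm => hdeg m (hLU.subset hm)) hlq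
  rwa [hLU] at hext

end Development

/-- Assuming the monomial Simon conjecture, for an equigenerated monomial ideal `I` all of
whose powers have linear quotients, either `v(I^k) = α(I)·k - 1` for all `k ≫ 0` or
`v(I^k) = α(I)·k` for all `k ≫ 0`. -/
theorem stmt7 {n : ℕ}
    (hSimon : ∀ (d : ℕ) (J : Ideal (MvPolynomial (Fin n) K)) (V : Finset (Fin n →₀ ℕ)),
      MinimalGens K J V → (∀ m ∈ V, mdeg m = d) → HasLinearQuotients K J →
      ExtendsByLinQuots K J ({m : Fin n →₀ ℕ | mdeg m = d} \ (V : Set (Fin n →₀ ℕ))))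
    (I : Ideal (MvPolynomial (Fin n) K)) (U : Finset (Fin n →₀ ℕ)) (d : ℕ)
    (hU : MinimalGens K I U) (hd : ∀ m ∈ U, mdeg m = d)
    (hlq : ∀ k : ℕ, 1 ≤ k → HasLinearQuotients K (I ^ k)) :
    (∃ N : ℕ, ∀ k : ℕ, N ≤ k → vNumber K (I ^ k) = initialDegree K I * k - 1) ∨
    (∃ N : ℕ, ∀ k : ℕ, N ≤ k → vNumber K (I ^ k) = initialDegree K I * k) := by
  simp only [← ge_iff_le, ← Filter.eventually_atTop]
  exact stmt7_general K hU.1 hd ((Filter.eventually_ge_atTop 1).mono fun k hk =>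
    extendsByLinQuots_pow_of_simon K hSimon hU.1 hd (hlq k hk))

end
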